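/- Let f : [0,∞) → ℍ be twice continuously differentiable and let v₀ ∈ 𝒟(A) be such that Av₀ + f(0) ∈ 𝒟(A). Let v(t) := G(t)v₀ + ∫₀ᵗ G(t−s)f(s)ds be the (classical) solution of v̇(t) = Av(t) + f(t) with v(0) = v₀. Then v(h) ∈ 𝒟(A) for small h > 0 and (v(h) − v(0))/h converges, as h → 0+, to v'(0) = Av₀ + f(0) in the graph norm of 𝒟(A), i.e. (v(h)−v(0))/h → Av₀+f(0) in ℍ and A((v(h)−v(0))/h) → A(Av₀+f(0)) in ℍ. -/

import Mathlib

open MeasureTheory Filter Topology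

noncomputable section

/-!
The flow property `v(t + h) = G(h)v(t) + ∫₀ʰ G(h - s)f(t + s)ds` of the mild solution shows that
`v(t)` lies in the domain of the generator exactly when `v` has a right derivative at `t`, and
that then `Av(t) = v'(t) - f(t)`. Reading the same identity with `t` and `h` exchanged and letting
`h → 0+` shows that `v'` is again a mild solution, with initial value `Av₀ + f(0)` and forcing
`f'`. Hence `A((v(h) - v(0))/h)` is the difference quotient of `v' - f` at `0`, whose limit is
`(A(Av₀ + f(0)) + f'(0)) - f'(0)`.
-/

open Set

section RightDerivative

variable {E : Type*} [NormedAddCommGroup E] [NormedSpace ℝ E]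

theorem hasDerivWithinAt_Ici_iff_tendsto {g : ℝ → E} {g' : E} {a : ℝ} :
    HasDerivWithinAt g g' (Ici a) a ↔
      Tendsto (fun h : ℝ => h⁻¹ • (g (a + h) - g a)) (𝓝[>] 0) (𝓝 g') := by
  have hmap : map (fun h => a + h) (𝓝[>] (0 : ℝ)) = 𝓝[>] a := by simp
  rw [← hasDerivWithinAt_Ioi_iff_Ici, hasDerivWithinAt_iff_tendsto_slope' self_notMem_Ioi, ← hmap,
    tendsto_map'_iff]
  simp only [Function.comp_def, slope_def_module, add_sub_cancel_left]

theorem hasDerivWithinAt_comp_const_add_Ici_zero {g : ℝ → E} {g' : E} {a : ℝ} :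
    HasDerivWithinAt (fun h => g (a + h)) g' (Ici 0) 0 ↔ HasDerivWithinAt g g' (Ici a) a := by
  simp only [hasDerivWithinAt_Ici_iff_tendsto, zero_add, add_zero]

theorem norm_inv_smul_sub_le_of_norm_hasDerivWithin_le {g g' : ℝ → E} {S : Set ℝ} {C a h : ℝ}
    (hg : ∀ x ∈ S, HasDerivWithinAt g (g' x) S x) (bound : ∀ x ∈ S, ‖g' x‖ ≤ C)
    (hS : Convex ℝ S) (hh : 0 < h) (ha : a ∈ S) (hah : a + h ∈ S) :
    ‖h⁻¹ • (g (a + h) - g a)‖ ≤ C := by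
  have hmvt := hS.norm_image_sub_le_of_norm_hasDerivWithin_le hg bound ha hah
  rw [add_sub_cancel_left, Real.norm_of_nonneg hh.le] at hmvt
  rwa [norm_smul, norm_inv, Real.norm_of_nonneg hh.le, inv_mul_le_iff₀ hh, mul_comm]

theorem hasDerivWithinAt_integral_diagonal [CompleteSpace E] {φ : ℝ → ℝ → E} {a : ℝ}
    (hφ : ContinuousOn φ.uncurry {p | a ≤ p.2 ∧ p.2 ≤ p.1}) :
    HasDerivWithinAt (fun t => ∫ s in a..t, φ t s) (φ a a) (Ici a) a := by
  rw [hasDerivWithinAt_iff_isLittleO, Asymptotics.isLittleO_iff]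
  intro ε hε
  obtain ⟨δ, hδ, hclose⟩ := Metric.continuousOn_iff.1 hφ (a, a) ⟨le_rfl, le_rfl⟩ ε hε
  filter_upwards [self_mem_nhdsWithin,
    mem_nhdsWithin_of_mem_nhds (Iio_mem_nhds (lt_add_of_pos_right a hδ))]
    with t (hat : a ≤ t) (htδ : t < a + δ)
  have hint : IntervalIntegrable (φ t) volume a t := by
    refine ContinuousOn.intervalIntegrable_of_Icc hat ?_
    exact hφ.comp (f := fun s => (t, s)) (by fun_prop) fun s hs => hs
  have hbound : ∀ s ∈ uIoc a t, ‖φ t s - φ a a‖ ≤ ε := by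
    intro s hs
    rw [uIoc_of_le hat] at hs
    rw [← dist_eq_norm]
    refine (hclose (t, s) ⟨hs.1.le, hs.2⟩ ?_).le
    rw [Prod.dist_eq, Real.dist_eq, Real.dist_eq, abs_of_nonneg (sub_nonneg.2 hat),
      abs_of_nonneg (sub_nonneg.2 hs.1.le)]
    exact max_lt (by linarith) (by linarith [hs.2])
  calc ‖(∫ s in a..t, φ t s) - (∫ s in a..a, φ a s) - (t - a) • φ a a‖
      = ‖∫ s in a..t, (φ t s - φ a a)‖ := by
        rw [intervalIntegral.integral_sub hint intervalIntegrable_const,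
          intervalIntegral.integral_const, intervalIntegral.integral_same, sub_zero]
    _ ≤ ε * ‖t - a‖ := intervalIntegral.norm_integral_le_of_norm_le_const hbound

theorem hasDerivWithinAt_integral_of_bounded_slope {φ : ℝ → ℝ → E} {φ' : ℝ → E}
    {a b c C : ℝ} (hint : ∀ h, c ≤ h → IntervalIntegrable (φ h) volume a b)
    (hbound : ∀ᶠ h in 𝓝[>] (0 : ℝ), ∀ s ∈ uIoc a b, ‖h⁻¹ • (φ (c + h) s - φ c s)‖ ≤ C)
    (hderiv : ∀ s ∈ uIoc a b, HasDerivWithinAt (fun h => φ h s) (φ' s) (Ici c) c) :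
    HasDerivWithinAt (fun h => ∫ s in a..b, φ h s) (∫ s in a..b, φ' s) (Ici c) c := by
  have hint_add : ∀ᶠ h in 𝓝[>] (0 : ℝ), IntervalIntegrable (φ (c + h)) volume a b := by
    filter_upwards [self_mem_nhdsWithin] with h (hh : 0 < h)
    exact hint _ (le_add_of_nonneg_right hh.le)
  have hlim : Tendsto (fun h : ℝ => ∫ s in a..b, h⁻¹ • (φ (c + h) s - φ c s)) (𝓝[>] 0)
      (𝓝 (∫ s in a..b, φ' s)) := by
    refine intervalIntegral.tendsto_integral_filter_of_dominated_convergence (fun _ => C)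
      ?_ (hbound.mono fun h => ae_of_all _) intervalIntegrable_const
      (ae_of_all _ fun s hs => hasDerivWithinAt_Ici_iff_tendsto.1 (hderiv s hs))
    filter_upwards [hint_add] with h hh
    exact ((hh.sub (hint c le_rfl)).smul h⁻¹).aestronglyMeasurable_restrict_uIoc
  refine hasDerivWithinAt_Ici_iff_tendsto.2 (hlim.congr' ?_)
  filter_upwards [hint_add] with h hh
  rw [intervalIntegral.integral_smul, intervalIntegral.integral_sub hh (hint c le_rfl)]

end RightDerivative

/-- A `C₀`-semigroup of bounded linear operators. The time parameter ranges over `ℝ` and only the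
values at nonnegative times are constrained. -/
structure IsC0Semigroup {E : Type*} [NormedAddCommGroup E] [NormedSpace ℝ E]
    (G : ℝ → E →L[ℝ] E) : Prop where
  protected map_zero : G 0 = .id ℝ E
  protected map_add : ∀ s t, 0 ≤ s → 0 ≤ t → G (s + t) = (G s).comp (G t)
  continuousOn_apply_const : ∀ x, ContinuousOn (fun t => G t x) (Ici 0)

theorem isC0Semigroup_restrictScalars {E : Type*} [NormedAddCommGroup E] [NormedSpace ℂ E]
    {G : ℝ → E →L[ℂ] E} (hzero : G 0 = .id ℂ E)
    (hadd : ∀ s t, 0 ≤ s → 0 ≤ t → G (s + t) = (G s).comp (G t))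
    (hcont : ∀ x, ContinuousOn (fun t => G t x) (Ici 0)) :
    IsC0Semigroup fun t => (G t).restrictScalars ℝ where
  map_zero := by rw [hzero]; rfl
  map_add s t hs ht := by rw [hadd s t hs ht]; rfl
  continuousOn_apply_const := hcont

section Generator

variable {E : Type*} [NormedAddCommGroup E] [NormedSpace ℝ E] {G : ℝ → E →L[ℝ] E}
  {x y x₁ x₂ y₁ y₂ : E}

/-- The graph of the infinitesimal generator `A` of `G`, as a relation: `x` belongs to the domain
of `A` and `A x = y`. -/
def HasGeneratorAt (G : ℝ → E →L[ℝ] E) (x y : E) : Prop :=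
  HasDerivWithinAt (fun t => G t x) y (Ici 0) 0

theorem HasGeneratorAt.unique (h₁ : HasGeneratorAt G x y₁) (h₂ : HasGeneratorAt G x y₂) :
    y₁ = y₂ :=
  (uniqueDiffWithinAt_Ici 0).eq_deriv _ h₁ h₂

theorem HasGeneratorAt.sub (h₁ : HasGeneratorAt G x₁ y₁) (h₂ : HasGeneratorAt G x₂ y₂) :
    HasGeneratorAt G (x₁ - x₂) (y₁ - y₂) := by
  simpa only [HasGeneratorAt, map_sub] using HasDerivWithinAt.fun_sub h₁ h₂

theorem HasGeneratorAt.const_smul (c : ℝ) (h : HasGeneratorAt G x y) :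
    HasGeneratorAt G (c • x) (c • y) := by
  simpa only [HasGeneratorAt, map_smul] using HasDerivWithinAt.fun_const_smul c h

theorem IsC0Semigroup.hasGeneratorAt_iff_tendsto (hG : IsC0Semigroup G) :
    HasGeneratorAt G x y ↔ Tendsto (fun h : ℝ => h⁻¹ • (G h x - x)) (𝓝[>] 0) (𝓝 y) := by
  simp only [HasGeneratorAt, hasDerivWithinAt_Ici_iff_tendsto, zero_add, hG.map_zero,
    ContinuousLinearMap.id_apply]

end Generator

/-- The mild solution `t ↦ G(t)x + ∫₀ᵗ G(t - s)f(s)ds` of the inhomogeneous Cauchy problem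
`v' = Av + f`, `v(0) = x`, where `A` is the generator of `G`. -/
def mildSolution {E : Type*} [NormedAddCommGroup E] [NormedSpace ℝ E] (G : ℝ → E →L[ℝ] E) (x : E)
    (f : ℝ → E) (t : ℝ) : E :=
  G t x + ∫ s in (0 : ℝ)..t, G (t - s) (f s)

namespace IsC0Semigroup

variable {E : Type*} [NormedAddCommGroup E] [NormedSpace ℝ E] {G : ℝ → E →L[ℝ] E}

variable [CompleteSpace E]

theorem exists_norm_le (hG : IsC0Semigroup G) (b : ℝ) : ∃ C, ∀ t ∈ Icc 0 b, ‖G t‖ ≤ C := by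
  have hpointwise : ∀ x, ∃ C, ∀ t : Icc 0 b, ‖G t x‖ ≤ C := by
    intro x
    obtain ⟨C, hC⟩ := isCompact_Icc.exists_bound_of_continuousOn
      ((hG.continuousOn_apply_const x).mono Icc_subset_Ici_self)
    exact ⟨C, fun t => hC t t.2⟩
  obtain ⟨C, hC⟩ := banach_steinhaus hpointwise
  exact ⟨C, fun t ht => hC ⟨t, ht⟩⟩

theorem continuousOn_uncurry (hG : IsC0Semigroup G) :
    ContinuousOn (fun p : ℝ × E => G p.1 p.2) (Ici 0 ×ˢ univ) := by
  rintro ⟨t, x⟩ ⟨ht, -⟩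
  obtain ⟨C, hC⟩ := hG.exists_norm_le (t + 1)
  have hLip : ∀ s ∈ Icc 0 (t + 1), LipschitzOnWith C.toNNReal (G s) univ := fun s hs =>
    ((G s).lipschitz.weaken (NNReal.coe_le_coe.1 ((hC s hs).trans (Real.le_coe_toNNReal C))))
      |>.lipschitzOnWith
  have hcont : ContinuousOn (fun p : ℝ × E => G p.1 p.2) (Icc 0 (t + 1) ×ˢ univ) :=
    continuousOn_prod_of_continuousOn_lipschitzOnWith' _ C.toNNReal hLip fun x _ =>
      (hG.continuousOn_apply_const x).mono Icc_subset_Ici_self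
  have hnhds : Icc 0 (t + 1) ∈ 𝓝[Ici 0] t := by
    rw [← Ici_inter_Iic]
    exact inter_mem self_mem_nhdsWithin (mem_nhdsWithin_of_mem_nhds (Iic_mem_nhds (lt_add_one t)))
  refine (hcont (t, x) ⟨⟨ht, (lt_add_one t).le⟩, trivial⟩).mono_of_mem_nhdsWithin ?_
  rw [nhdsWithin_prod_eq]
  exact prod_mem_prod hnhds self_mem_nhdsWithin

theorem continuousOn_apply (hG : IsC0Semigroup G) {α : Type*} [TopologicalSpace α] {S : Set α}
    {τ : α → ℝ} {g : α → E} (hτ : ContinuousOn τ S) (hτ_nonneg : ∀ a ∈ S, 0 ≤ τ a)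
    (hg : ContinuousOn g S) : ContinuousOn (fun a => G (τ a) (g a)) S :=
  hG.continuousOn_uncurry.comp (hτ.prodMk hg) fun a ha => ⟨hτ_nonneg a ha, trivial⟩

theorem intervalIntegrable_apply_sub (hG : IsC0Semigroup G) {f : ℝ → E} {a b t : ℝ}
    (hab : a ≤ b) (hbt : b ≤ t) (hf : ContinuousOn f (Icc a b)) :
    IntervalIntegrable (fun s => G (t - s) (f s)) volume a b :=
  (hG.continuousOn_apply (by fun_prop) (fun _ hs => sub_nonneg.2 (hs.2.trans hbt))
    hf).intervalIntegrable_of_Icc hab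

theorem apply_mildSolution (hG : IsC0Semigroup G) {x : E} {f : ℝ → E} {t h : ℝ} (ht : 0 ≤ t)
    (hh : 0 ≤ h) (hf : ContinuousOn f (Icc 0 t)) :
    G h (mildSolution G x f t) = G (t + h) x + ∫ s in (0 : ℝ)..t, G (t + h - s) (f s) := by
  have hGh : ∀ r, 0 ≤ r → ∀ z, G h (G r z) = G (r + h) z := fun r hr z => by
    rw [add_comm, hG.map_add h r hh hr, ContinuousLinearMap.comp_apply]
  rw [mildSolution, map_add, hGh t ht,
    ← (G h).intervalIntegral_comp_comm (hG.intervalIntegrable_apply_sub ht le_rfl hf)]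
  congr 1
  refine intervalIntegral.integral_congr fun s hs => ?_
  rw [uIcc_of_le ht] at hs
  rw [hGh _ (sub_nonneg.2 hs.2), sub_add_eq_add_sub]

theorem mildSolution_add (hG : IsC0Semigroup G) {x : E} {f : ℝ → E} {t h : ℝ} (ht : 0 ≤ t)
    (hh : 0 ≤ h) (hf : ContinuousOn f (Icc 0 (t + h))) :
    mildSolution G x f (t + h) =
      mildSolution G (mildSolution G x f t) (fun s => f (t + s)) h := by
  have htth : t ≤ t + h := le_add_of_nonneg_right hh
  have hf_left : ContinuousOn f (Icc 0 t) := hf.mono (Icc_subset_Icc_right htth)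
  have hf_right : ContinuousOn f (Icc t (t + h)) := hf.mono (Icc_subset_Icc_left ht)
  have hshift : ∫ s in t..t + h, G (t + h - s) (f s) =
      ∫ s in (0 : ℝ)..h, G (h - s) (f (t + s)) := by
    have hsubst := intervalIntegral.integral_comp_add_left (a := 0) (b := h)
      (fun s => G (t + h - s) (f s)) t
    simpa only [add_zero, add_sub_add_left_eq_sub] using hsubst.symm
  rw [mildSolution.eq_def G (mildSolution G x f t), hG.apply_mildSolution ht hh hf_left, add_assoc,
    ← hshift, intervalIntegral.integral_add_adjacent_intervals
      (hG.intervalIntegrable_apply_sub ht htth hf_left)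
      (hG.intervalIntegrable_apply_sub htth le_rfl hf_right), mildSolution]

theorem hasDerivWithinAt_duhamel_zero (hG : IsC0Semigroup G) {f : ℝ → E}
    (hf : ContinuousOn f (Ici 0)) :
    HasDerivWithinAt (fun t => ∫ s in (0 : ℝ)..t, G (t - s) (f s)) (f 0) (Ici 0) 0 := by
  have hcont : ContinuousOn (fun p : ℝ × ℝ => G (p.1 - p.2) (f p.2)) {p | 0 ≤ p.2 ∧ p.2 ≤ p.1} :=
    hG.continuousOn_apply (by fun_prop) (fun _ hp => sub_nonneg.2 hp.2)
      (hf.comp continuousOn_snd fun _ hp => hp.1)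
  simpa [hG.map_zero] using
    hasDerivWithinAt_integral_diagonal (φ := fun t s => G (t - s) (f s)) hcont

theorem hasGeneratorAt_iff_hasDerivWithinAt_mildSolution_zero (hG : IsC0Semigroup G) {x y : E}
    {f : ℝ → E} (hf : ContinuousOn f (Ici 0)) :
    HasGeneratorAt G x y ↔ HasDerivWithinAt (mildSolution G x f) (y + f 0) (Ici 0) 0 := by
  have hduhamel := hG.hasDerivWithinAt_duhamel_zero hf
  refine ⟨fun h => HasDerivWithinAt.fun_add h hduhamel, fun h => ?_⟩
  simpa [HasGeneratorAt, mildSolution] using h.fun_sub hduhamel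

theorem hasGeneratorAt_mildSolution_iff (hG : IsC0Semigroup G) {x y : E} {f : ℝ → E} {t : ℝ}
    (ht : 0 ≤ t) (hf : ContinuousOn f (Ici 0)) :
    HasGeneratorAt G (mildSolution G x f t) y ↔
      HasDerivWithinAt (mildSolution G x f) (y + f t) (Ici t) t := by
  have hf_shift : ContinuousOn (fun s => f (t + s)) (Ici 0) :=
    hf.comp (by fun_prop) fun s hs => add_nonneg ht hs
  have hflow : ∀ h ∈ Ici (0 : ℝ), mildSolution G x f (t + h) =
      mildSolution G (mildSolution G x f t) (fun s => f (t + s)) h := fun h hh =>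
    hG.mildSolution_add ht hh (hf.mono Icc_subset_Ici_self)
  rw [hG.hasGeneratorAt_iff_hasDerivWithinAt_mildSolution_zero hf_shift, add_zero,
    ← hasDerivWithinAt_comp_const_add_Ici_zero (a := t)]
  exact ⟨fun h => h.congr hflow (hflow 0 self_mem_Ici),
    fun h => h.congr (fun r hr => (hflow r hr).symm) (hflow 0 self_mem_Ici).symm⟩

theorem hasDerivWithinAt_integral_apply_comp_const_add (hG : IsC0Semigroup G) {f f' : ℝ → E}
    {t : ℝ} (ht : 0 ≤ t) (hf : ∀ s ∈ Ici 0, HasDerivWithinAt f (f' s) (Ici 0) s)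
    (hf' : ContinuousOn f' (Ici 0)) :
    HasDerivWithinAt (fun h => ∫ s in (0 : ℝ)..t, G (t - s) (f (h + s)))
      (∫ s in (0 : ℝ)..t, G (t - s) (f' s)) (Ici 0) 0 := by
  obtain ⟨C, hC⟩ := hG.exists_norm_le t
  obtain ⟨M, hM⟩ := isCompact_Icc.exists_bound_of_continuousOn
    (hf'.mono (Icc_subset_Ici_self : Icc 0 (t + 1) ⊆ Ici 0))
  refine hasDerivWithinAt_integral_of_bounded_slope (φ := fun h s => G (t - s) (f (h + s)))
    (C := C * M) (fun h hh => ?_) ?_ fun s hs => ?_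
  · exact hG.intervalIntegrable_apply_sub ht le_rfl
      ((HasDerivWithinAt.continuousOn hf).comp (by fun_prop) fun s hs => add_nonneg hh hs.1)
  · filter_upwards [Ioc_mem_nhdsGT zero_lt_one] with h hh s hs
    rw [uIoc_of_le ht] at hs
    have hslope : ‖h⁻¹ • (f (s + h) - f s)‖ ≤ M :=
      norm_inv_smul_sub_le_of_norm_hasDerivWithin_le
        (fun r hr => (hf r hr.1).mono Icc_subset_Ici_self) hM (convex_Icc 0 (t + 1)) hh.1
        ⟨hs.1.le, by linarith [hs.2]⟩ ⟨by linarith [hs.1, hh.1], by linarith [hs.2, hh.2]⟩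
    rw [zero_add, zero_add, ← map_sub, ← map_smul, add_comm h s]
    exact (G (t - s)).le_of_opNorm_le_of_le
      (hC _ ⟨sub_nonneg.2 hs.2, sub_le_self t hs.1.le⟩) hslope
  · rw [uIoc_of_le ht] at hs
    have hderiv := hasDerivWithinAt_comp_const_add_Ici_zero.2
      ((hf s hs.1.le).mono (Ici_subset_Ici.2 hs.1.le))
    simpa only [Function.comp_def, add_comm s] using
      (G (t - s)).hasFDerivAt.comp_hasDerivWithinAt 0 hderiv

theorem hasDerivWithinAt_mildSolution (hG : IsC0Semigroup G) {x y : E} {f f' : ℝ → E} {t : ℝ}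
    (ht : 0 ≤ t) (hx : HasGeneratorAt G x y)
    (hf : ∀ s ∈ Ici 0, HasDerivWithinAt f (f' s) (Ici 0) s) (hf' : ContinuousOn f' (Ici 0)) :
    HasDerivWithinAt (mildSolution G x f) (mildSolution G (y + f 0) f' t) (Ici t) t := by
  have hf_cont : ContinuousOn f (Ici 0) := HasDerivWithinAt.continuousOn hf
  have hflow : ∀ h ∈ Ici (0 : ℝ), mildSolution G x f (t + h) =
      G t (mildSolution G x f h) + ∫ s in (0 : ℝ)..t, G (t - s) (f (h + s)) := fun h hh => by
    rw [add_comm, hG.mildSolution_add hh ht (hf_cont.mono Icc_subset_Ici_self), mildSolution]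
  have hstart := (hG.hasGeneratorAt_iff_hasDerivWithinAt_mildSolution_zero hf_cont).1 hx
  rw [← hasDerivWithinAt_comp_const_add_Ici_zero]
  refine HasDerivWithinAt.congr ?_ hflow (hflow 0 self_mem_Ici)
  exact ((G t).hasFDerivAt.comp_hasDerivWithinAt 0 hstart).fun_add
    (hG.hasDerivWithinAt_integral_apply_comp_const_add ht hf hf')

end IsC0Semigroup

theorem statement8_general {E : Type*} [NormedAddCommGroup E] [NormedSpace ℝ E] [CompleteSpace E]
    {G : ℝ → E →L[ℝ] E} (hG : IsC0Semigroup G) {dom : Set E} {A : E → E}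
    (hdom : ∀ x, x ∈ dom ↔ ∃ y, HasGeneratorAt G x y)
    (hA : ∀ x ∈ dom, HasGeneratorAt G x (A x))
    {f : ℝ → E} (hf : ContDiffOn ℝ 1 f (Ici 0))
    {x : E} (hx : x ∈ dom) (hx' : A x + f 0 ∈ dom) :
    (∀ t, 0 ≤ t → mildSolution G x f t ∈ dom) ∧
    Tendsto (fun h : ℝ => h⁻¹ • (mildSolution G x f h - mildSolution G x f 0)) (𝓝[>] 0)
      (𝓝 (A x + f 0)) ∧
    Tendsto (fun h : ℝ => A (h⁻¹ • (mildSolution G x f h - mildSolution G x f 0))) (𝓝[>] 0)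
      (𝓝 (A (A x + f 0))) := by
  set f' := derivWithin f (Ici 0)
  have hf' : ContinuousOn f' (Ici 0) := hf.continuousOn_derivWithin (uniqueDiffOn_Ici 0) le_rfl
  have hderiv : ∀ t ∈ Ici 0, HasDerivWithinAt f (f' t) (Ici 0) t := fun t ht =>
    (hf.differentiableOn one_ne_zero t ht).hasDerivWithinAt
  set v := mildSolution G x f
  set u := mildSolution G (A x + f 0) f'
  have hv : ∀ t, 0 ≤ t → HasGeneratorAt G (v t) (u t - f t) := fun t ht =>
    (hG.hasGeneratorAt_mildSolution_iff ht hf.continuousOn).2 <| by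
      simpa only [sub_add_cancel] using
        hG.hasDerivWithinAt_mildSolution ht (hA x hx) hderiv hf'
  have huf : HasDerivWithinAt (fun t => u t - f t) (A (A x + f 0)) (Ici 0) 0 := by
    have hu := (hG.hasGeneratorAt_iff_hasDerivWithinAt_mildSolution_zero hf').1 (hA _ hx')
    simpa only [add_sub_cancel_right] using hu.fun_sub (hderiv 0 self_mem_Ici)
  refine ⟨fun t ht => (hdom _).2 ⟨_, hv t ht⟩, ?_, ?_⟩
  · simpa only [zero_add] using hasDerivWithinAt_Ici_iff_tendsto.1
      ((hG.hasGeneratorAt_iff_hasDerivWithinAt_mildSolution_zero hf.continuousOn).1 (hA x hx))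
  · refine (hasDerivWithinAt_Ici_iff_tendsto.1 huf).congr' ?_
    filter_upwards [self_mem_nhdsWithin] with h (hh : 0 < h)
    have hquot := ((hv h hh.le).sub (hv 0 le_rfl)).const_smul h⁻¹
    rw [zero_add]
    exact hquot.unique (hA _ ((hdom _).2 ⟨_, hquot⟩))

/-- Lemma 2.5 of the paper: let `G` be a `C₀`-semigroup on a complex
Hilbert space `H` with generator `(dom, A)`, let `f` be twice continuously differentiable
and let `v₀ ∈ 𝒟(A)` with `A v₀ + f 0 ∈ 𝒟(A)`. Then the classical solution
`v(t) = G(t)v₀ + ∫₀ᵗ G(t - s) f(s) ds` of `v̇ = Av + f` satisfies `v(h) ∈ 𝒟(A)` for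
`h ≥ 0` and `(v(h) - v(0))/h → v'(0) = A v₀ + f 0` as `h → 0+` in the graph norm of
`𝒟(A)`, i.e. `(v(h) - v(0))/h → A v₀ + f 0` and `A((v(h) - v(0))/h) → A(A v₀ + f 0)`
in `H`. -/
theorem statement8
    {H : Type*} [NormedAddCommGroup H] [InnerProductSpace ℂ H] [CompleteSpace H]
    (G : ℝ → H →L[ℂ] H)
    (hG0 : G 0 = ContinuousLinearMap.id ℂ H)
    (hGadd : ∀ t s : ℝ, 0 ≤ t → 0 ≤ s → G (t + s) = (G t).comp (G s))
    (hGcont : ∀ v : H, ContinuousOn (fun t => G t v) (Set.Ici (0:ℝ)))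
    (dom : Set H) (A : H → H)
    (hdom : ∀ v : H, v ∈ dom ↔ ∃ w : H,
      Tendsto (fun h : ℝ => (h : ℂ)⁻¹ • (G h v - v)) (𝓝[>] 0) (𝓝 w))
    (hA : ∀ v ∈ dom,
      Tendsto (fun h : ℝ => (h : ℂ)⁻¹ • (G h v - v)) (𝓝[>] 0) (𝓝 (A v)))
    (f : ℝ → H) (hf : ContDiff ℝ 2 f)
    (v₀ : H) (hv₀ : v₀ ∈ dom) (hAv₀ : A v₀ + f 0 ∈ dom)
    (v : ℝ → H) (hv : ∀ t : ℝ, v t = G t v₀ + ∫ s in (0:ℝ)..t, G (t - s) (f s)) :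
    (∀ h : ℝ, 0 ≤ h → v h ∈ dom) ∧
    Tendsto (fun h : ℝ => (h : ℂ)⁻¹ • (v h - v 0)) (𝓝[>] 0) (𝓝 (A v₀ + f 0)) ∧
    Tendsto (fun h : ℝ => A ((h : ℂ)⁻¹ • (v h - v 0))) (𝓝[>] 0)
      (𝓝 (A (A v₀ + f 0))) := by
  have hG := isC0Semigroup_restrictScalars hG0 hGadd hGcont
  obtain rfl : v = mildSolution (fun t => (G t).restrictScalars ℝ) v₀ f := funext hv
  simp only [← Complex.ofReal_inv, Complex.coe_smul] at *
  exact statement8_general hG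
    (fun x => (hdom x).trans (exists_congr fun _ => hG.hasGeneratorAt_iff_tendsto.symm))
    (fun x hx => hG.hasGeneratorAt_iff_tendsto.2 (hA x hx))
    (hf.of_le one_le_two).contDiffOn hv₀ hAv₀
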